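/- Proposition 1 (partial correctness of the substitutability semi-algorithm): assume the LTS S_A is deterministic, and fix sets of initial configurations C_R⁰ ⊆ C_R and C_A⁰ ⊆ C_A. Suppose there exists an initial configuration c_R⁰ ∈ C_R⁰ such that for every initial configuration c_A⁰ ∈ C_A⁰, the lock-step reachable set Reach of (c_R⁰, c_A⁰) contains a pair (c_R, c_A) witnessing one of the three ⊥-cases: (a) ¬ subst c_R c_A, or (b) c_R is a deadlock of S_R while c_A is not a deadlock of S_A, or (c) some shared label ope ∈ R_R ∩ R_A has a transition c_R →[ope] c_R' in S_R but no transition c_A →[ope] c_A' in S_A. Then S_R is not simulated by S_A with respect to component substitutability: there is no relation ρ satisfying clauses (0), (i), (ii) and (iv) such that every initial configuration of C_R⁰ is related by ρ to some initial configuration of C_A⁰. -/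

import Mathlib

/-!
Proposition 1: partial correctness of the substitutability semi-algorithm.
-/

variable {CR CA L : Type*}

/-- A configuration is a deadlock if it has no outgoing transition with any
label of the LTS's label set. -/
def DeadlockOf {C : Type*} (step : C → L → C → Prop) (R : Set L) (c : C) : Prop :=
  ∀ ope ∈ R, ∀ c', ¬ step c ope c'

/-- Clause (0): structural substitutability. -/
def Clause0 (subst : CR → CA → Prop) (ρ : CR → CA → Prop) : Prop :=
  ∀ cR cA, ρ cR cA → subst cR cA

/-- The strict-simulation clause (i). -/
def ClauseI (stepR : CR → L → CR → Prop) (stepA : CA → L → CA → Prop)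
    (RR RA : Set L) (ρ : CR → CA → Prop) : Prop :=
  ∀ cR cA, ρ cR cA → ∀ ope ∈ RR ∩ RA, ∀ cR', stepR cR ope cR' →
    ∃ cA', stepA cA ope cA' ∧ ρ cR' cA'

/-- The stuttering clause (ii). -/
def ClauseII (stepR : CR → L → CR → Prop)
    (RR RA : Set L) (ρ : CR → CA → Prop) : Prop :=
  ∀ cR cA, ρ cR cA → ∀ ope' ∈ RR \ RA, ∀ cR', stepR cR ope' cR' → ρ cR' cA

/-- The no-new-deadlock clause (iv). -/
def ClauseIV (stepR : CR → L → CR → Prop) (stepA : CA → L → CA → Prop)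
    (RR RA : Set L) (ρ : CR → CA → Prop) : Prop :=
  ∀ cR cA, ρ cR cA → DeadlockOf stepR RR cR → DeadlockOf stepA RA cA

/-- Determinism of an LTS. -/
def Deterministic (step : CA → L → CA → Prop) : Prop :=
  ∀ c ope c₁ c₂, step c ope c₁ → step c ope c₂ → c₁ = c₂

/-- The lock-step reachable set of `(cR0, cA0)`. -/
inductive Reach (stepR : CR → L → CR → Prop) (stepA : CA → L → CA → Prop)
    (RR RA : Set L) (cR0 : CR) (cA0 : CA) : CR → CA → Prop
  | init : Reach stepR stepA RR RA cR0 cA0 cR0 cA0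
  | shared {cR cA cR' cA' ope} : Reach stepR stepA RR RA cR0 cA0 cR cA →
      ope ∈ RR ∩ RA → stepR cR ope cR' → stepA cA ope cA' →
      Reach stepR stepA RR RA cR0 cA0 cR' cA'
  | new {cR cA cR' ope'} : Reach stepR stepA RR RA cR0 cA0 cR cA →
      ope' ∈ RR \ RA → stepR cR ope' cR' →
      Reach stepR stepA RR RA cR0 cA0 cR' cA

section LockStep

variable {stepR : CR → L → CR → Prop} {stepA : CA → L → CA → Prop} {RR RA : Set L}
  {subst ρ : CR → CA → Prop} {cR cR' : CR} {cA cA' : CA} {ope : L}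

/-- The `⊥`-cases of the semi-algorithm: a pair of configurations which is structurally
non-substitutable, exhibits a new deadlock, or enables a shared label on the `S_R` side only. -/
def BotCase (stepR : CR → L → CR → Prop) (stepA : CA → L → CA → Prop)
    (RR RA : Set L) (subst : CR → CA → Prop) (cR : CR) (cA : CA) : Prop :=
  (¬ subst cR cA) ∨
    (DeadlockOf stepR RR cR ∧ ¬ DeadlockOf stepA RA cA) ∨
    (∃ ope ∈ RR ∩ RA, (∃ cR', stepR cR ope cR') ∧ ¬ ∃ cA', stepA cA ope cA')

theorem not_botCase_of_rel (h0 : Clause0 subst ρ) (hI : ClauseI stepR stepA RR RA ρ)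
    (hIV : ClauseIV stepR stepA RR RA ρ) (hρ : ρ cR cA) :
    ¬ BotCase stepR stepA RR RA subst cR cA := by
  rintro (hsubst | ⟨hdead, hlive⟩ | ⟨ope, hope, ⟨cR', hR⟩, hblocked⟩)
  · exact hsubst (h0 cR cA hρ)
  · exact hlive (hIV cR cA hρ hdead)
  · obtain ⟨cA', hA, -⟩ := hI cR cA hρ ope hope cR' hR
    exact hblocked ⟨cA', hA⟩

/-- Clause (i) only provides *some* matching step; determinism turns it into *every* one, so that
`ρ` cannot evade the lock-step exploration. -/
theorem ClauseI.rel_of_step (hI : ClauseI stepR stepA RR RA ρ) (hdet : Deterministic stepA)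
    (hρ : ρ cR cA) (hope : ope ∈ RR ∩ RA) (hR : stepR cR ope cR') (hA : stepA cA ope cA') :
    ρ cR' cA' := by
  obtain ⟨cA'', hA'', hρ'⟩ := hI cR cA hρ ope hope cR' hR
  rwa [hdet cA ope cA' cA'' hA hA'']

theorem Reach.rel {cR0 : CR} {cA0 : CA} (hreach : Reach stepR stepA RR RA cR0 cA0 cR cA)
    (hdet : Deterministic stepA) (hI : ClauseI stepR stepA RR RA ρ)
    (hII : ClauseII stepR RR RA ρ) (hρ0 : ρ cR0 cA0) : ρ cR cA := by
  induction hreach with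
  | init => exact hρ0
  | shared _ hope hR hA ih => exact hI.rel_of_step hdet ih hope hR hA
  | new _ hope hR ih => exact hII _ _ ih _ hope _ hR

end LockStep

theorem proposition_one
    (stepR : CR → L → CR → Prop) (stepA : CA → L → CA → Prop)
    (RR RA : Set L) (subst : CR → CA → Prop)
    (hdet : Deterministic stepA)
    (CR0 : Set CR) (CA0 : Set CA)
    (hbot : ∃ cR0 ∈ CR0, ∀ cA0 ∈ CA0, ∃ cR cA,
      Reach stepR stepA RR RA cR0 cA0 cR cA ∧
      ((¬ subst cR cA) ∨
       (DeadlockOf stepR RR cR ∧ ¬ DeadlockOf stepA RA cA) ∨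
       (∃ ope ∈ RR ∩ RA, (∃ cR', stepR cR ope cR') ∧ ¬ ∃ cA', stepA cA ope cA'))) :
    ¬ ∃ ρ : CR → CA → Prop,
      Clause0 subst ρ ∧ ClauseI stepR stepA RR RA ρ ∧ ClauseII stepR RR RA ρ ∧
      ClauseIV stepR stepA RR RA ρ ∧
      ∀ cR0 ∈ CR0, ∃ cA0 ∈ CA0, ρ cR0 cA0 := by
  rintro ⟨ρ, h0, hI, hII, hIV, hinit⟩
  obtain ⟨cR0, hcR0, hbot⟩ := hbot
  obtain ⟨cA0, hcA0, hρ0⟩ := hinit cR0 hcR0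
  obtain ⟨cR, cA, hreach, hcase⟩ := hbot cA0 hcA0
  have hρ : ρ cR cA := hreach.rel hdet hI hII hρ0
  exact not_botCase_of_rel h0 hI hIV hρ hcase
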